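/- arXiv:2407.13762 — 2 statements merged into one kernel-verified Lean document; each statement's English description precedes it below -/
import Mathlib

section
/- Boundary points are not hit by finite-energy radial Loewner flow (n = 1). Let τ ∈ (0,∞), let θ : [0,τ) → ℝ be locally absolutely continuous, and let ω : [0,τ) → (0,2π) be locally absolutely continuous satisfying ω'_s = cot(ω_s/2) − θ'_s for almost every s ∈ [0,τ). If liminf_{t→τ⁻} min(ω_t, 2π − ω_t) = 0, then ∫₀^τ (θ'_s)² ds = ∞, i.e., the Dirichlet energy E_τ(θ) is infinite. -/
open MeasureTheory Filter Set
open scoped Real Topology ENNReal Classical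

noncomputable section

/-- Absolute continuity of a scalar function on `[0,b]`: it is the integral of a
(locally) integrable function. -/
def AbsCont1 (b : ℝ) (f : ℝ → ℝ) : Prop :=
  ∃ v : ℝ → ℝ, IntegrableOn v (Icc 0 b) ∧
    ∀ t ∈ Icc (0 : ℝ) b, f t = f 0 + ∫ s in (0 : ℝ)..t, v s

/-- A function whose increments are controlled by those of an absolutely continuous function is
absolutely continuous. -/
theorem AbsolutelyContinuousOnInterval.of_dist_le {X Y : Type*} [PseudoMetricSpace X]
    [PseudoMetricSpace Y] {f : ℝ → X} {g : ℝ → Y} {a b : ℝ} (K : NNReal)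
    (hg : AbsolutelyContinuousOnInterval g a b)
    (h : ∀ x ∈ uIcc a b, ∀ y ∈ uIcc a b, dist (f x) (f y) ≤ K * dist (g x) (g y)) :
    AbsolutelyContinuousOnInterval f a b := by
  rw [absolutelyContinuousOnInterval_iff] at hg ⊢
  intro ε hε
  obtain ⟨δ, hδ, H⟩ := hg (ε / (K + 1)) (by positivity)
  refine ⟨δ, hδ, fun E hE hlen => ?_⟩
  have hlt := H E hE hlen
  rw [lt_div_iff₀ (by positivity)] at hlt
  refine lt_of_le_of_lt ?_ hlt
  rw [Finset.sum_mul]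
  refine Finset.sum_le_sum fun i hi => ?_
  have hmem := hE.1 i hi
  nlinarith [h _ hmem.1 _ hmem.2, dist_nonneg (x := g (E.2 i).1) (y := g (E.2 i).2)]

/-- Post-composition of an absolutely continuous function with a Lipschitz function. -/
theorem LipschitzOnWith.comp_absolutelyContinuousOnInterval {X Y : Type*} [PseudoMetricSpace X]
    [PseudoMetricSpace Y] {F : X → Y} {K : NNReal} {s : Set X} {g : ℝ → X} {a b : ℝ}
    (hF : LipschitzOnWith K F s) (hg : AbsolutelyContinuousOnInterval g a b)
    (hs : MapsTo g (uIcc a b) s) :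
    AbsolutelyContinuousOnInterval (fun x => F (g x)) a b :=
  hg.of_dist_le K fun _ hx _ hy => hF.dist_le_mul _ (hs hx) _ (hs hy)

theorem AbsCont1.absolutelyContinuousOnInterval {b : ℝ} {f : ℝ → ℝ} (hb : 0 ≤ b)
    (hf : AbsCont1 b f) : AbsolutelyContinuousOnInterval f 0 b := by
  obtain ⟨v, hv, hfv⟩ := hf
  have hint : IntervalIntegrable v volume 0 b :=
    (intervalIntegrable_iff_integrableOn_Icc_of_le hb).2 hv
  refine (hint.absolutelyContinuousOnInterval_intervalIntegral (c := 0) (by simp)).of_dist_le 1 ?_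
  intro x hx y hy
  rw [uIcc_of_le hb] at hx hy
  rw [hfv x hx, hfv y hy]
  simp

theorem hasDerivAt_log_sin_half {x : ℝ} (hx : x ∈ Ioo (0 : ℝ) (2 * π)) :
    HasDerivAt (fun y => Real.log (Real.sin (y / 2))) (Real.cot (x / 2) / 2) x := by
  have hs : 0 < Real.sin (x / 2) :=
    Real.sin_pos_of_pos_of_lt_pi (by linarith [hx.1]) (by linarith [hx.2])
  refine (((hasDerivAt_id' x).div_const 2).sin.log hs.ne').congr_deriv ?_
  rw [Real.cot_eq_cos_div_sin]
  ring

theorem exists_lipschitzOnWith_log_sin_half {m M : ℝ} (hm : 0 < m) (hM : M < 2 * π) :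
    ∃ K, LipschitzOnWith K (fun y => Real.log (Real.sin (y / 2))) (Icc m M) := by
  refine ContDiffOn.exists_lipschitzOnWith (n := 1) ?_ (by decide) (convex_Icc _ _) isCompact_Icc
  refine ContDiffOn.log (by fun_prop) fun x hx => ?_
  exact (Real.sin_pos_of_pos_of_lt_pi (by linarith [hx.1]) (by linarith [hx.2])).ne'

/-- Along the flow `ω' = cot(ω/2) - θ'`, the quantity `log sin(ω/2)` decreases by at most
`(1/8) ∫ (θ')²`. -/
theorem log_sin_half_sub_ge {t : ℝ} (ht : 0 ≤ t) {ω u : ℝ → ℝ}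
    (hac : AbsolutelyContinuousOnInterval ω 0 t)
    (hω : ∀ s ∈ Icc (0 : ℝ) t, ω s ∈ Ioo (0 : ℝ) (2 * π))
    (hode : ∀ᵐ s, s ∈ Icc (0 : ℝ) t → deriv ω s = Real.cot (ω s / 2) - u s)
    (hu : IntegrableOn (fun s => u s ^ 2) (Icc 0 t)) :
    -(1 / 8) * ∫ s in (0 : ℝ)..t, u s ^ 2 ≤
      Real.log (Real.sin (ω t / 2)) - Real.log (Real.sin (ω 0 / 2)) := by
  have hcont : ContinuousOn ω (Icc 0 t) := by simpa [uIcc_of_le ht] using hac.continuousOn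
  obtain ⟨x₀, hx₀, hmin⟩ := isCompact_Icc.exists_isMinOn (nonempty_Icc.2 ht) hcont
  obtain ⟨x₁, hx₁, hmax⟩ := isCompact_Icc.exists_isMaxOn (nonempty_Icc.2 ht) hcont
  obtain ⟨K, hK⟩ := exists_lipschitzOnWith_log_sin_half (hω x₀ hx₀).1 (hω x₁ hx₁).2
  have hV := hK.comp_absolutelyContinuousOnInterval hac (fun x hx => by
    rw [uIcc_of_le ht] at hx
    exact ⟨hmin hx, hmax hx⟩)
  rw [← hV.integral_deriv_eq_sub, ← intervalIntegral.integral_const_mul]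
  refine intervalIntegral.integral_mono_ae_restrict ht ?_ hV.intervalIntegrable_deriv ?_
  · exact (((intervalIntegrable_iff_integrableOn_Icc_of_le ht).2 hu).const_mul _)
  · refine (ae_restrict_iff' measurableSet_Icc).2 ?_
    filter_upwards [hac.ae_differentiableAt, hode] with s hd hs hmem
    have hd' := (hd (by rwa [uIcc_of_le ht])).hasDerivAt
    have hder := (hasDerivAt_log_sin_half (hω s hmem)).comp s hd'
    have heq : deriv (fun x => Real.log (Real.sin (ω x / 2))) s =
        Real.cot (ω s / 2) / 2 * deriv ω s := hder.deriv
    simp only [heq, hs hmem]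
    nlinarith [sq_nonneg (Real.cot (ω s / 2) - u s / 2)]

theorem two_mul_sin_half_le_min {x : ℝ} (hx : x ∈ Ioo (0 : ℝ) (2 * π)) :
    2 * Real.sin (x / 2) ≤ min x (2 * π - x) := by
  refine le_min (by linarith [Real.sin_le (x := x / 2) (by linarith [hx.1])]) ?_
  rw [← Real.sin_pi_sub]
  linarith [Real.sin_le (x := π - x / 2) (by linarith [hx.2])]

/-- Boundary points are not hit by the finite-energy radial Loewner
flow (`n = 1`): if `ω : [0,τ) → (0,2π)` solves `ω' = cot(ω/2) - θ'` and `ω` accumulates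
at `{0, 2π}` as `t → τ⁻`, then the driver `θ` has infinite Dirichlet energy on `[0,τ)`. -/
theorem boundary_point_not_hit_of_finite_energy
    (τ : ℝ) (hτ : 0 < τ)
    (θ ω : ℝ → ℝ)
    (hθac : ∀ b : ℝ, 0 ≤ b → b < τ → AbsCont1 b θ)
    (hωac : ∀ b : ℝ, 0 ≤ b → b < τ → AbsCont1 b ω)
    (hω : ∀ t ∈ Ico (0 : ℝ) τ, ω t ∈ Ioo (0 : ℝ) (2 * π))
    (hode : ∀ᵐ s ∂(volume.restrict (Ico (0 : ℝ) τ)),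
      deriv ω s = Real.cot (ω s / 2) - deriv θ s)
    (hhit : Filter.liminf (fun t => min (ω t) (2 * π - ω t)) (𝓝[<] τ) = 0) :
    ∫⁻ s in Ico (0 : ℝ) τ, ENNReal.ofReal (deriv θ s ^ 2) = ⊤ := by
  by_contra hfin
  have hint : IntegrableOn (fun s => deriv θ s ^ 2) (Ico 0 τ) := by
    refine ⟨((measurable_deriv θ).pow_const 2).aestronglyMeasurable, ?_⟩
    rw [hasFiniteIntegral_iff_ofReal (Eventually.of_forall fun s => sq_nonneg _)]
    exact lt_top_iff_ne_top.2 hfin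
  set A := ∫ s in Ico 0 τ, deriv θ s ^ 2
  have hsin : ∀ t ∈ Ico (0 : ℝ) τ, 0 < Real.sin (ω t / 2) := fun t ht =>
    Real.sin_pos_of_pos_of_lt_pi (by linarith [(hω t ht).1]) (by linarith [(hω t ht).2])
  set δ := Real.exp (Real.log (Real.sin (ω 0 / 2)) - A / 8)
  have hlow : ∀ t ∈ Ico (0 : ℝ) τ, 2 * δ ≤ min (ω t) (2 * π - ω t) := by
    intro t ht
    have hsub : Icc 0 t ⊆ Ico 0 τ := Icc_subset_Ico_right ht.2
    have hV := log_sin_half_sub_ge ht.1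
      ((hωac t ht.1 ht.2).absolutelyContinuousOnInterval ht.1) (fun s hs => hω s (hsub hs))
      (((ae_restrict_iff' measurableSet_Ico).1 hode).mono fun s hs hmem => hs (hsub hmem))
      (hint.mono_set hsub)
    have hA : ∫ s in (0 : ℝ)..t, deriv θ s ^ 2 ≤ A := by
      rw [intervalIntegral.integral_of_le ht.1]
      exact setIntegral_mono_set hint (Eventually.of_forall fun s => sq_nonneg _)
        (Ioc_subset_Icc_self.trans hsub).eventuallyLE
    have hδ : δ ≤ Real.sin (ω t / 2) := by
      rw [← Real.le_log_iff_exp_le (hsin t ht)]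
      linarith
    linarith [two_mul_sin_half_le_min (hω t ht)]
  have hev : ∀ᶠ t in 𝓝[<] τ, t ∈ Ico (0 : ℝ) τ := Ico_mem_nhdsLT hτ
  have hbdd : IsBoundedUnder (· ≤ ·) (𝓝[<] τ) (fun t => min (ω t) (2 * π - ω t)) :=
    ⟨2 * π, eventually_map.2 (hev.mono fun t ht => (min_le_left _ _).trans (hω t ht).2.le)⟩
  have hle := le_liminf_of_le hbdd.isCoboundedUnder_ge (hev.mono hlow)
  linarith [Real.exp_pos (Real.log (Real.sin (ω 0 / 2)) - A / 8)]

end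
end

section
/- Boundary points are not swallowed by finite-energy multiradial Loewner flow. Fix T > 0 and let θ : [0,T] → 𝒳ₙ be continuous. Fix j ∈ {1,…,n} and τ ∈ (0,T], and suppose ξ : [0,τ) → ℝ is locally absolutely continuous with θ^j_t < ξ_t < θ^{j+1}_t for all t ∈ [0,τ) (with the convention θ^{n+1} = θ¹ + 2π), satisfying the multiradial Loewner ODE ξ'_t = Σ_{k=1}^n cot((ξ_t − θ^k_t)/2) for almost every t. If liminf_{t→τ⁻} min( ξ_t − θ^j_t , θ^{j+1}_t − ξ_t ) = 0, then J_T(θ) = ∞. -/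
open MeasureTheory Filter Set
open scoped Real Topology ENNReal Classical

noncomputable section

/-- The configuration space `𝒳ₙ` of `n` ordered points on (a lift of) the circle:
`θ¹ < θ² < ⋯ < θⁿ < θ¹ + 2π`. -/
def Xspace (n : ℕ) : Set (Fin n → ℝ) :=
  {x | StrictMono x ∧ ∀ i j : Fin n, x i < x j + 2 * π}

/-- The value `θ^{j+1}`, with the convention `θ^{n+1} = θ¹ + 2π`. -/
def nextVal {n : ℕ} (x : Fin n → ℝ) (j : Fin n) : ℝ :=
  if h : (j : ℕ) + 1 < n then x ⟨(j : ℕ) + 1, h⟩ else x ⟨0, j.pos⟩ + 2 * π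

/-- The gap `θ^{j+1} - θ^j` (with wrap-around convention). -/
def gap {n : ℕ} (x : Fin n → ℝ) (j : Fin n) : ℝ := nextVal x j - x j

/-- The minimal gap `Δ(θ) = min_j (θ^{j+1} - θ^j)`. -/
def minGap {n : ℕ} (x : Fin n → ℝ) : ℝ := ⨅ j : Fin n, gap x j

/-- `d(θ) := max_j |2π/n - (θ^{j+1} - θ^j)|`. -/
def dGap {n : ℕ} (x : Fin n → ℝ) : ℝ := ⨆ j : Fin n, |2 * π / n - gap x j|

/-- `φ^j(θ) = ∑_{k ≠ j} cot((θ^j - θ^k)/2)`. -/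
def phi {n : ℕ} (x : Fin n → ℝ) (j : Fin n) : ℝ :=
  ∑ k ∈ Finset.univ.erase j, Real.cot ((x j - x k) / 2)

/-- `φ_a^j := (a/4) φ^j`. -/
def phiA {n : ℕ} (a : ℝ) (x : Fin n → ℝ) (j : Fin n) : ℝ := a / 4 * phi x j

/-- Absolute continuity of every coordinate of `θ` on `[0, T]`: each component is the
integral of a (locally) integrable function. -/
def AbsCont {n : ℕ} (T : ℝ) (θ : ℝ → Fin n → ℝ) : Prop :=
  ∃ v : ℝ → Fin n → ℝ, (∀ j, IntegrableOn (fun s => v s j) (Icc 0 T)) ∧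
    ∀ t ∈ Icc (0 : ℝ) T, ∀ j, θ t j = θ 0 j + ∫ s in (0 : ℝ)..t, v s j

/-- Truncated multiradial Dirichlet energy `J_T(θ)`. -/
def mEnergy (n : ℕ) (T : ℝ) (θ : ℝ → Fin n → ℝ) : ℝ≥0∞ :=
  if AbsCont T θ then
    ENNReal.ofReal (1 / 2) *
      ∫⁻ s in Ioc (0 : ℝ) T,
        ENNReal.ofReal (∑ j, (deriv (fun t => θ t j) s - 2 * phi (θ s) j) ^ 2)
  else ⊤

/-- Multiradial Dirichlet energy `J(θ) = lim_{T→∞} J_T(θ)`, the supremum of the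
nondecreasing family `J_T(θ)`. -/
def mEnergyInf (n : ℕ) (θ : ℝ → Fin n → ℝ) : ℝ≥0∞ := ⨆ T : ℝ, mEnergy n T θ

theorem AbsolutelyContinuousOnInterval.lipschitzOnWith_comp {f g : ℝ → ℝ} {a b : ℝ} {K : NNReal}
    (hf : AbsolutelyContinuousOnInterval f a b) (hg : LipschitzOnWith K g (f '' uIcc a b)) :
    AbsolutelyContinuousOnInterval (fun t => g (f t)) a b := by
  unfold AbsolutelyContinuousOnInterval at hf ⊢
  refine squeeze_zero' ?_ ?_ (by simpa using hf.const_mul (K : ℝ))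
  · exact Eventually.of_forall fun _ => Finset.sum_nonneg fun _ _ => dist_nonneg
  rw [eventually_inf_principal]
  filter_upwards with E hE
  rw [Finset.mul_sum]
  exact Finset.sum_le_sum fun i hi => hg.dist_le_mul _ (mem_image_of_mem f (hE.1 i hi).1)
    _ (mem_image_of_mem f (hE.1 i hi).2)

theorem AbsolutelyContinuousOnInterval.log_sin {f : ℝ → ℝ} {a b : ℝ}
    (hf : AbsolutelyContinuousOnInterval f a b) (hsin : ∀ t ∈ uIcc a b, Real.sin (f t) ≠ 0) :
    AbsolutelyContinuousOnInterval (fun t => Real.log (Real.sin (f t))) a b := by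
  have hd : ContDiffOn ℝ 1 (fun x => Real.log (Real.sin x)) (f '' uIcc a b) := by
    refine ContDiffOn.log Real.contDiff_sin.contDiffOn ?_
    rintro _ ⟨t, ht, rfl⟩
    exact hsin t ht
  have hconv : Convex ℝ (f '' uIcc a b) :=
    (isPreconnected_uIcc.image f hf.continuousOn).ordConnected.convex
  obtain ⟨K, hK⟩ := ContDiffOn.exists_lipschitzOnWith hd one_ne_zero hconv
    (isCompact_uIcc.image_of_continuousOn hf.continuousOn)
  exact hf.lipschitzOnWith_comp (g := fun x => Real.log (Real.sin x)) hK

theorem AbsolutelyContinuousOnInterval.sum {ι : Type*} (s : Finset ι) {f : ι → ℝ → ℝ} {a b : ℝ}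
    (hf : ∀ i ∈ s, AbsolutelyContinuousOnInterval (f i) a b) :
    AbsolutelyContinuousOnInterval (fun t => ∑ i ∈ s, f i t) a b := by
  induction s using Finset.induction_on with
  | empty =>
    simpa using (contDiffOn_const (c := (0 : ℝ)) (n := 1)
      (s := uIcc a b)).absolutelyContinuousOnInterval
  | insert i s hi ih =>
    simp only [Finset.sum_insert hi]
    exact (hf i (Finset.mem_insert_self i s)).fun_add
      (ih fun k hk => hf k (Finset.mem_insert_of_mem hk))

/-- Absolute continuity only depends on the values of the function on the interval. -/
theorem AbsolutelyContinuousOnInterval.congr_eqOn {f g : ℝ → ℝ} {a b : ℝ}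
    (hf : AbsolutelyContinuousOnInterval f a b) (hfg : EqOn f g (uIcc a b)) :
    AbsolutelyContinuousOnInterval g a b := by
  unfold AbsolutelyContinuousOnInterval at hf ⊢
  refine hf.congr' ?_
  rw [EventuallyEq, eventually_inf_principal]
  filter_upwards with E hE
  exact Finset.sum_congr rfl fun i hi => by rw [hfg (hE.1 i hi).1, hfg (hE.1 i hi).2]

theorem AbsCont.absCont1 {n : ℕ} {T b : ℝ} {θ : ℝ → Fin n → ℝ} (hθ : AbsCont T θ) (hb : b ≤ T)
    (k : Fin n) : AbsCont1 b fun t => θ t k := by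
  obtain ⟨v, hv, hθv⟩ := hθ
  exact ⟨fun s => v s k, (hv k).mono_set (Icc_subset_Icc_right hb),
    fun t ht => hθv t ⟨ht.1, ht.2.trans hb⟩ k⟩

theorem Real.cot_neg (x : ℝ) : Real.cot (-x) = -Real.cot x := by
  simp [Real.cot_eq_cos_div_sin, div_neg]

/-- The difference formula for the cotangent. -/
theorem Real.cot_mul_cot {a b : ℝ} (ha : Real.sin a ≠ 0) (hb : Real.sin b ≠ 0)
    (hab : Real.sin (b - a) ≠ 0) :
    Real.cot a * Real.cot b = Real.cot (b - a) * (Real.cot a - Real.cot b) - 1 := by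
  have hsub : Real.cot a - Real.cot b = Real.sin (b - a) / (Real.sin a * Real.sin b) := by
    rw [Real.cot_eq_cos_div_sin, Real.cot_eq_cos_div_sin, Real.sin_sub]
    field_simp
  rw [hsub]
  simp only [Real.cot_eq_cos_div_sin]
  field_simp
  rw [Real.cos_sub]
  ring

theorem Real.hasDerivAt_log_sin {x : ℝ} (hx : Real.sin x ≠ 0) :
    HasDerivAt (fun y => Real.log (Real.sin y)) (Real.cot x) x := by
  rw [Real.cot_eq_cos_div_sin]
  exact (Real.hasDerivAt_sin x).log hx

theorem Real.abs_sin_le_of_nonneg {x : ℝ} (hx : 0 ≤ x) : |Real.sin x| ≤ x :=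
  Real.abs_sin_le_abs.trans_eq (abs_of_nonneg hx)

theorem phi_eq_sum {n : ℕ} (x : Fin n → ℝ) (k : Fin n) :
    phi x k = ∑ l, Real.cot ((x k - x l) / 2) := by
  rw [phi, ← Finset.add_sum_erase _ _ (Finset.mem_univ k)]
  simp [Real.cot_eq_cos_div_sin]

theorem sin_half_sub_ne_zero {a b : ℝ} (hne : a ≠ b) (hab : a < b + 2 * π)
    (hba : b < a + 2 * π) : Real.sin ((a - b) / 2) ≠ 0 := by
  intro h
  rw [Real.sin_eq_zero_iff_of_lt_of_lt (by linarith) (by linarith)] at h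
  exact hne (by linarith)

theorem sin_half_sub_ne_zero_of_mem_Xspace {n : ℕ} {x : Fin n → ℝ} (hx : x ∈ Xspace n) {k l : Fin n}
    (hkl : k ≠ l) : Real.sin ((x k - x l) / 2) ≠ 0 :=
  sin_half_sub_ne_zero (hx.1.injective.ne hkl) (hx.2 k l) (hx.2 l k)

theorem nextVal_le {n : ℕ} {x : Fin n → ℝ} (hx : x ∈ Xspace n) (j k : Fin n) :
    nextVal x j ≤ x k + 2 * π := by
  unfold nextVal
  split_ifs with h
  · exact (hx.2 _ k).le
  · gcongr
    exact hx.1.monotone (Fin.mk_le_of_le_val (Nat.zero_le _))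

/-- A point of the arc `(x_j, x_{j+1})` differs from every `x_k` modulo `2π`. -/
theorem sin_half_sub_ne_zero_of_mem_arc {n : ℕ} {x : Fin n → ℝ} (hx : x ∈ Xspace n)
    {j : Fin n} {y : ℝ} (hy : x j < y ∧ y < nextVal x j) (k : Fin n) :
    Real.sin ((y - x k) / 2) ≠ 0 := by
  obtain ⟨hjy, hyj⟩ := hy
  rcases le_or_gt k j with hkj | hjk
  · have hle : x k ≤ x j := hx.1.monotone hkj
    have hnext := nextVal_le hx j k
    exact sin_half_sub_ne_zero (by linarith) (by linarith) (by linarith [Real.pi_pos])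
  · have hle : nextVal x j ≤ x k := by
      have h : (j : ℕ) + 1 < n := lt_of_le_of_lt hjk k.isLt
      rw [nextVal, dif_pos h]
      exact hx.1.monotone (Fin.mk_le_of_le_val hjk)
    exact sin_half_sub_ne_zero (by linarith) (by linarith [Real.pi_pos])
      (by linarith [hx.2 k j])

theorem exists_abs_sin_nextVal_sub {n : ℕ} (x : Fin n → ℝ) (j : Fin n) (y : ℝ) :
    ∃ k, |Real.sin ((nextVal x j - y) / 2)| = |Real.sin ((y - x k) / 2)| := by
  unfold nextVal
  split_ifs with h
  · exact ⟨⟨j + 1, h⟩, by rw [← abs_neg, ← Real.sin_neg]; ring_nf⟩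
  · refine ⟨⟨0, j.pos⟩, ?_⟩
    rw [← Real.sin_pi_sub]
    ring_nf

/-- The cotangents seen from a point `y` satisfy, up to a constant, the Bessel-type identity
`(∑ₖ cₖ)² = ∑ₖ cₖ² + 2 ∑ₖ cₖ φᵏ`. -/
theorem sq_sum_cot_ge {n : ℕ} {x : Fin n → ℝ} (hx : x ∈ Xspace n) {y : ℝ}
    (hy : ∀ k, Real.sin ((y - x k) / 2) ≠ 0) :
    ∑ k, Real.cot ((y - x k) / 2) ^ 2 + 2 * ∑ k, Real.cot ((y - x k) / 2) * phi x k - (n : ℝ) ^ 2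
      ≤ (∑ k, Real.cot ((y - x k) / 2)) ^ 2 := by
  set c : Fin n → ℝ := fun k => Real.cot ((y - x k) / 2) with hc
  set D : Fin n → Fin n → ℝ := fun k l => Real.cot ((x k - x l) / 2) with hD
  have hterm : ∀ k l, (if k = l then c k ^ 2 else 0) + D k l * (c k - c l) - 1 ≤ c k * c l := by
    intro k l
    by_cases hkl : k = l
    · subst hkl
      simp only [if_true, sub_self, mul_zero]
      nlinarith
    · have harg : (y - x l) / 2 - (y - x k) / 2 = (x k - x l) / 2 := by ring
      have h := Real.cot_mul_cot (hy k) (hy l)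
        (by rw [harg]; exact sin_half_sub_ne_zero_of_mem_Xspace hx hkl)
      rw [harg] at h
      simp only [if_neg hkl, zero_add]
      exact h.ge
  have hswap : ∑ k, ∑ l, D k l * c l = -∑ k, c k * phi x k := by
    rw [Finset.sum_comm, ← Finset.sum_neg_distrib]
    refine Finset.sum_congr rfl fun l _ => ?_
    rw [phi_eq_sum, Finset.mul_sum, ← Finset.sum_neg_distrib]
    refine Finset.sum_congr rfl fun k _ => ?_
    have : D k l = -Real.cot ((x l - x k) / 2) := by
      rw [← Real.cot_neg]
      simp only [hD]
      ring_nf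
    rw [this]
    ring
  have hdirect : ∑ k, ∑ l, D k l * c k = ∑ k, c k * phi x k := by
    refine Finset.sum_congr rfl fun k _ => ?_
    rw [phi_eq_sum, Finset.mul_sum]
    exact Finset.sum_congr rfl fun l _ => mul_comm _ _
  have hsum := Finset.sum_le_sum fun k (_ : k ∈ Finset.univ) =>
    Finset.sum_le_sum fun l (_ : l ∈ Finset.univ) => hterm k l
  simp only [mul_sub, Finset.sum_sub_distrib, Finset.sum_add_distrib, hswap, hdirect,
    Finset.sum_ite_eq, Finset.mem_univ, if_true, Finset.sum_const, Finset.card_univ,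
    Fintype.card_fin, nsmul_eq_mul, mul_one] at hsum
  rw [sq (∑ k, c k), Finset.sum_mul_sum]
  linarith

/-- If `y` moves along the Loewner flow and the `x_k` with velocities `v_k`, then the derivative of
`∑ₖ log sin((y - x_k)/2)` is bounded below by the energy density. -/
theorem sum_cot_mul_velocity_ge {n : ℕ} {x v : Fin n → ℝ} (hx : x ∈ Xspace n) {y : ℝ}
    (hy : ∀ k, Real.sin ((y - x k) / 2) ≠ 0) :
    -(∑ k, (v k - 2 * phi x k) ^ 2) - (n : ℝ) ^ 2 ≤
      ∑ k, Real.cot ((y - x k) / 2) * ((∑ l, Real.cot ((y - x l) / 2) - v k) / 2) := by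
  have hsq := sq_sum_cot_ge hx hy
  set c : Fin n → ℝ := fun k => Real.cot ((y - x k) / 2) with hc
  have hexpand : ∑ k, c k * ((∑ l, c l - v k) / 2) = ((∑ k, c k) ^ 2 - ∑ k, c k * v k) / 2 := by
    rw [sq, Finset.sum_mul, ← Finset.sum_sub_distrib, Finset.sum_div]
    exact Finset.sum_congr rfl fun k _ => by ring
  have hyoung : -(∑ k, (v k - 2 * phi x k) ^ 2) ≤
      ∑ k, c k ^ 2 + 2 * ∑ k, c k * phi x k - ∑ k, c k * v k := by
    rw [← Finset.sum_neg_distrib, Finset.mul_sum, ← Finset.sum_add_distrib,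
      ← Finset.sum_sub_distrib]
    refine Finset.sum_le_sum fun k _ => ?_
    nlinarith [sq_nonneg (2 * c k - (v k - 2 * phi x k)), sq_nonneg (v k - 2 * phi x k)]
  have hE : 0 ≤ ∑ k, (v k - 2 * phi x k) ^ 2 := Finset.sum_nonneg fun k _ => sq_nonneg _
  rw [hexpand]
  nlinarith [sq_nonneg (n : ℝ)]

theorem integral_le_toReal_lintegral {α : Type*} [MeasurableSpace α] {μ : Measure α} {f g : α → ℝ}
    (hf : Integrable f μ) (hfg : f ≤ᵐ[μ] g) (hg : ∫⁻ a, ENNReal.ofReal (g a) ∂μ ≠ ⊤) :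
    ∫ a, f a ∂μ ≤ (∫⁻ a, ENNReal.ofReal (g a) ∂μ).toReal := by
  rw [integral_eq_lintegral_pos_part_sub_lintegral_neg_part hf]
  refine (sub_le_self _ ENNReal.toReal_nonneg).trans (ENNReal.toReal_mono hg ?_)
  exact lintegral_mono_ae (hfg.mono fun a ha => ENNReal.ofReal_le_ofReal ha)

/-- Along the flow, the potential `∑ₖ log sin((ξ - θᵏ)/2)` decreases by at most the energy plus a
constant multiple of the elapsed time. -/
theorem sum_log_sin_ge_of_energy {n : ℕ} {t : ℝ} (ht : 0 ≤ t) {θ : ℝ → Fin n → ℝ} {ξ : ℝ → ℝ}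
    (hX : ∀ s ∈ Icc (0 : ℝ) t, θ s ∈ Xspace n)
    (hθ : ∀ k, AbsolutelyContinuousOnInterval (fun s => θ s k) 0 t)
    (hξ : AbsolutelyContinuousOnInterval ξ 0 t)
    (hsin : ∀ s ∈ Icc (0 : ℝ) t, ∀ k, Real.sin ((ξ s - θ s k) / 2) ≠ 0)
    (hode : ∀ᵐ s ∂volume.restrict (Ioc 0 t),
      deriv ξ s = ∑ k : Fin n, Real.cot ((ξ s - θ s k) / 2))
    (hE : ∫⁻ s in Ioc (0 : ℝ) t,
      ENNReal.ofReal (∑ k, (deriv (fun r => θ r k) s - 2 * phi (θ s) k) ^ 2) ≠ ⊤) :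
    ∑ k, Real.log (Real.sin ((ξ 0 - θ 0 k) / 2)) - (n : ℝ) ^ 2 * t -
      (∫⁻ s in Ioc (0 : ℝ) t,
        ENNReal.ofReal (∑ k, (deriv (fun r => θ r k) s - 2 * phi (θ s) k) ^ 2)).toReal ≤
      ∑ k, Real.log (Real.sin ((ξ t - θ t k) / 2)) := by
  set W : ℝ → ℝ := fun s => ∑ k, Real.log (Real.sin ((ξ s - θ s k) / 2)) with hW
  have hWac : AbsolutelyContinuousOnInterval W 0 t := by
    refine AbsolutelyContinuousOnInterval.sum _ fun k _ => ?_
    have hhalf : AbsolutelyContinuousOnInterval (fun s => (ξ s - θ s k) / 2) 0 t := by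
      simpa only [div_eq_inv_mul] using (hξ.fun_sub (hθ k)).const_mul (2⁻¹ : ℝ)
    refine hhalf.log_sin fun s hs => ?_
    rw [uIcc_of_le ht] at hs
    exact hsin s hs k
  have hftc := hWac.integral_deriv_eq_sub
  have hWint : Integrable (deriv W) (volume.restrict (Ioc 0 t)) :=
    (intervalIntegrable_iff_integrableOn_Ioc_of_le ht).1 hWac.intervalIntegrable_deriv
  rw [intervalIntegral.integral_of_le ht] at hftc
  have hdiffθ : ∀ᵐ s, ∀ k, s ∈ uIcc 0 t → DifferentiableAt ℝ (fun r => θ r k) s :=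
    ae_all_iff.2 fun k => (hθ k).ae_differentiableAt
  have hbound : (fun s => -deriv W s - (n : ℝ) ^ 2) ≤ᵐ[volume.restrict (Ioc 0 t)]
      fun s => ∑ k, (deriv (fun r => θ r k) s - 2 * phi (θ s) k) ^ 2 := by
    filter_upwards [hode, ae_restrict_of_ae hξ.ae_differentiableAt, ae_restrict_of_ae hdiffθ,
      ae_restrict_mem measurableSet_Ioc] with s hs hξs hθs hmem
    have hIcc : s ∈ Icc 0 t := Ioc_subset_Icc_self hmem
    rw [uIcc_of_le ht] at hξs hθs
    have hderiv : HasDerivAt W (∑ k, Real.cot ((ξ s - θ s k) / 2) *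
        ((deriv ξ s - deriv (fun r => θ r k) s) / 2)) s := by
      refine HasDerivAt.fun_sum fun k _ => ?_
      exact HasDerivAt.comp (h₂ := fun y => Real.log (Real.sin y)) s
        (Real.hasDerivAt_log_sin (hsin s hIcc k))
        (((hξs hIcc).hasDerivAt.sub (hθs k hIcc).hasDerivAt).div_const 2)
    have hge := sum_cot_mul_velocity_ge (v := fun k => deriv (fun r => θ r k) s)
      (hX s hIcc) (hsin s hIcc)
    rw [← hs, ← hderiv.deriv] at hge
    linarith
  have hle := integral_le_toReal_lintegral (hWint.fun_neg.sub (integrable_const ((n : ℝ) ^ 2)))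
    hbound hE
  have hint : ∫ s in Ioc 0 t, (-deriv W s - (n : ℝ) ^ 2) = -(W t - W 0) - (n : ℝ) ^ 2 * t := by
    rw [integral_sub hWint.fun_neg (integrable_const _), integral_neg, hftc]
    simp [ht, mul_comm]
  simp only [Pi.sub_apply] at hle
  rw [hint] at hle
  linarith

theorem exp_le_abs_sin_of_le_sum_log {n : ℕ} {z : Fin n → ℝ} (hz : ∀ k, Real.sin (z k) ≠ 0)
    {C : ℝ} (hC : C ≤ ∑ k, Real.log (Real.sin (z k))) (k : Fin n) :
    Real.exp C ≤ |Real.sin (z k)| := by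
  rw [← Real.le_log_iff_exp_le (abs_pos.2 (hz k)), Real.log_abs]
  refine hC.trans ?_
  rw [← Finset.add_sum_erase _ _ (Finset.mem_univ k)]
  have : ∑ l ∈ Finset.univ.erase k, Real.log (Real.sin (z l)) ≤ 0 :=
    Finset.sum_nonpos fun l _ => by
      rw [← Real.log_abs]
      exact Real.log_nonpos (abs_nonneg _) (Real.abs_sin_le_one _)
  linarith

/-- Boundary points are not swallowed by the finite-energy multiradial
Loewner flow: if `ξ` stays in the `j`-th arc `(θ^j, θ^{j+1})`, solves the multiradial
Loewner ODE `ξ' = ∑ₖ cot((ξ - θ^k)/2)`, and reaches the endpoints of the arc as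
`t → τ⁻` for some `τ ≤ T`, then `J_T(θ) = ∞`. -/
theorem boundary_not_swallowed_multiradial
    (n : ℕ) (hn : 1 ≤ n) (T : ℝ) (hT : 0 < T)
    (θ : ℝ → Fin n → ℝ)
    (hcont : ContinuousOn θ (Icc 0 T))
    (hX : ∀ t ∈ Icc (0 : ℝ) T, θ t ∈ Xspace n)
    (j : Fin n) (τ : ℝ) (hτ0 : 0 < τ) (hτT : τ ≤ T)
    (ξ : ℝ → ℝ)
    (hξac : ∀ b : ℝ, 0 ≤ b → b < τ → AbsCont1 b ξ)
    (hmid : ∀ t ∈ Ico (0 : ℝ) τ, θ t j < ξ t ∧ ξ t < nextVal (θ t) j)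
    (hode : ∀ᵐ s ∂(volume.restrict (Ico (0 : ℝ) τ)),
      deriv ξ s = ∑ k : Fin n, Real.cot ((ξ s - θ s k) / 2))
    (hhit : Filter.liminf (fun t => min (ξ t - θ t j) (nextVal (θ t) j - ξ t))
      (𝓝[<] τ) = 0) :
    mEnergy n T θ = ⊤ := by
  by_contra hfin
  have hac : AbsCont T θ := by
    by_contra h
    exact hfin (if_neg h)
  have hET : ∫⁻ s in Ioc (0 : ℝ) T,
      ENNReal.ofReal (∑ k, (deriv (fun r => θ r k) s - 2 * phi (θ s) k) ^ 2) ≠ ⊤ := by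
    intro h
    refine hfin ?_
    rw [mEnergy, if_pos hac, h]
    exact ENNReal.mul_top (by simp)
  set E := ∫⁻ s in Ioc (0 : ℝ) T,
      ENNReal.ofReal (∑ k, (deriv (fun r => θ r k) s - 2 * phi (θ s) k) ^ 2) with hEdef
  set C : ℝ := ∑ k, Real.log (Real.sin ((ξ 0 - θ 0 k) / 2)) - (n : ℝ) ^ 2 * τ - E.toReal with hC
  have hsin : ∀ s ∈ Ico (0 : ℝ) τ, ∀ k, Real.sin ((ξ s - θ s k) / 2) ≠ 0 := fun s hs =>
    sin_half_sub_ne_zero_of_mem_arc (hX s ⟨hs.1, hs.2.le.trans hτT⟩) (hmid s hs)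
  have hlow : ∀ t ∈ Ico (0 : ℝ) τ,
      2 * Real.exp C ≤ min (ξ t - θ t j) (nextVal (θ t) j - ξ t) := by
    intro t ht
    have htT : t ≤ T := ht.2.le.trans hτT
    have hmono : ∫⁻ s in Ioc (0 : ℝ) t,
        ENNReal.ofReal (∑ k, (deriv (fun r => θ r k) s - 2 * phi (θ s) k) ^ 2) ≤ E :=
      lintegral_mono_set (Ioc_subset_Ioc_right htT)
    have hW := sum_log_sin_ge_of_energy ht.1
      (fun s hs => hX s ⟨hs.1, hs.2.trans htT⟩)
      (fun k => (hac.absCont1 htT k).absolutelyContinuousOnInterval ht.1)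
      ((hξac t ht.1 ht.2).absolutelyContinuousOnInterval ht.1)
      (fun s hs => hsin s ⟨hs.1, hs.2.trans_lt ht.2⟩)
      (ae_restrict_of_ae_restrict_of_subset
        (fun s hs => mem_Ico.2 ⟨hs.1.le, hs.2.trans_lt ht.2⟩) hode)
      (ne_top_of_le_ne_top hET hmono)
    have hCt : C ≤ ∑ k, Real.log (Real.sin ((ξ t - θ t k) / 2)) := by
      have h1 := ENNReal.toReal_mono hET hmono
      have h2 : (n : ℝ) ^ 2 * t ≤ (n : ℝ) ^ 2 * τ := by
        gcongr
        exact ht.2.le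
      linarith
    have hexp := exp_le_abs_sin_of_le_sum_log (hsin t ht) hCt
    obtain ⟨hjt, htj⟩ := hmid t ht
    refine le_min ?_ ?_
    · have := Real.abs_sin_le_of_nonneg (x := (ξ t - θ t j) / 2) (by linarith)
      linarith [hexp j]
    · obtain ⟨k, hk⟩ := exists_abs_sin_nextVal_sub (θ t) j (ξ t)
      have := Real.abs_sin_le_of_nonneg (x := (nextVal (θ t) j - ξ t) / 2) (by linarith)
      linarith [hexp k]
  have hev : ∀ᶠ t in 𝓝[<] τ, t ∈ Ico (0 : ℝ) τ :=
    Filter.mem_of_superset (Ioo_mem_nhdsLT hτ0) Ioo_subset_Ico_self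
  have hupper : ∀ᶠ t in 𝓝[<] τ, min (ξ t - θ t j) (nextVal (θ t) j - ξ t) ≤ 2 * π := by
    filter_upwards [hev] with t ht
    have hXt := hX t ⟨ht.1, ht.2.le.trans hτT⟩
    exact (min_le_left _ _).trans (by linarith [(hmid t ht).2, nextVal_le hXt j j])
  have hliminf := le_liminf_of_le (isBoundedUnder_of_eventually_le hupper).isCoboundedUnder_ge
    (hev.mono hlow)
  rw [hhit] at hliminf
  linarith [Real.exp_pos C]

end
end
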